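/- arXiv:1612.08755 — 3 statements merged into one kernel-verified Lean document; each statement's English description precedes it below -/
import Mathlib

section
/- Let U ⊆ ℝⁿ be open and η : ℝⁿ × U → ℝⁿ a C¹ map that is ℤⁿ-periodic in the first variable. Set c(a) = ∫_{[0,1]ⁿ} η(q,a) dq, and assume that for each a ∈ U there is a differentiable ℤⁿ-periodic function u_a : ℝⁿ → ℝ with ∇u_a(q) = η(q,a) − c(a) for all q. Define S(q,a) = u_a(q) − u_a(0). Then: (i) S : ℝⁿ × U → ℝ is C¹ with ∂S/∂q(q,a) = η(q,a) − c(a), so ∂S/∂q is C¹ in (q,a); and (ii) ∂S/∂a is differentiable with respect to q, with ∂/∂q(∂S/∂a)(q,a) = ∂η/∂a(q,a) − Dc(a), which is continuous; in particular ∂S/∂a is C¹ in the variable q. -/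
/-!
Along segments from the zero section, `S (q, a) = S (0, a) + ∫₀¹ P (t q, a) q dt`, where
`P = ∂S/∂q`. When `P` and `S (0, ·)` are `C¹`, differentiation under the integral sign shows that
`S` is `C¹`, although nothing was assumed about the dependence of `S` on `a` away from `q = 0`.

`S` need not be `C²`, so the mixed derivative is not covered by the symmetry of second derivatives.
Instead `∂S/∂a · w` is the pointwise limit, as `t → 0`, of the difference quotients
`t⁻¹ (S (q, a + t w) - S (q, a))`. Their `q`-derivatives are the difference quotients of `P`, which
converge uniformly near each point because a `C¹` map is strictly differentiable. The limit of the
derivatives is therefore the derivative of the limit, which gives `∂/∂q (∂S/∂a) = ∂P/∂a`.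

The theorem is the case `P = η - c`, read as a covector field.
-/

open Set Filter MeasureTheory Function Asymptotics
open scoped Topology

section CompactParametricIntegral

variable {X H F : Type*} [TopologicalSpace X] [NormedAddCommGroup F] {K : Set X} {U : Set H}

theorem exists_eventually_norm_le_of_isCompact [TopologicalSpace H] (hK : IsCompact K)
    {f : H → X → F} (hf : ContinuousOn f.uncurry (U ×ˢ K)) {a : H} (ha : a ∈ U) :
    ∃ C : ℝ, ∀ᶠ b in 𝓝[U] a, ∀ x ∈ K, ‖f b x‖ ≤ C := by
  obtain ⟨C, hC⟩ := hK.exists_bound_of_continuousOn (hf.uncurry_left a ha)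
  obtain ⟨V, hV, hclose⟩ := hK.mem_uniformity_of_prod hf ha (Metric.dist_mem_uniformity one_pos)
  refine ⟨C + 1, mem_of_superset hV fun b hb x hx ↦ ?_⟩
  have hdist : ‖f b x - f a x‖ < 1 := by simpa only [dist_eq_norm] using! hclose b hb x hx
  calc ‖f b x‖ ≤ ‖f a x‖ + ‖f b x - f a x‖ := norm_le_norm_add_norm_sub' _ _
    _ ≤ C + 1 := add_le_add (hC x hx) hdist.le

variable [T2Space X] [MeasurableSpace X] [OpensMeasurableSpace X] {μ : Measure X}
  [IsFiniteMeasureOnCompacts μ] [NormedSpace ℝ F]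

theorem continuousOn_setIntegral_of_isCompact [TopologicalSpace H] [FirstCountableTopology H]
    (hK : IsCompact K) {f : H → X → F} (hf : ContinuousOn f.uncurry (U ×ˢ K)) :
    ContinuousOn (fun a ↦ ∫ x in K, f a x ∂μ) U := by
  intro a ha
  obtain ⟨C, hC⟩ := exists_eventually_norm_le_of_isCompact hK hf ha
  refine continuousWithinAt_of_dominated (bound := fun _ ↦ C) ?_ ?_
    (integrableOn_const hK.measure_ne_top) ?_
  · filter_upwards [self_mem_nhdsWithin] with b hb
    exact (hf.uncurry_left b hb).aestronglyMeasurable_of_isCompact hK hK.measurableSet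
  · filter_upwards [hC] with b hb
    exact (ae_restrict_mem hK.measurableSet).mono hb
  · filter_upwards [ae_restrict_mem hK.measurableSet] with x hx
    exact hf.uncurry_right x hx a ha

variable [NormedAddCommGroup H] [NormedSpace ℝ H]

theorem hasFDerivAt_setIntegral_of_isCompact (hK : IsCompact K) (hU : IsOpen U) {f : H → X → F}
    {f' : H → X → H →L[ℝ] F} (hf : ∀ a ∈ U, ContinuousOn (f a) K)
    (hf' : ContinuousOn f'.uncurry (U ×ˢ K))
    (hderiv : ∀ a ∈ U, ∀ x ∈ K, HasFDerivAt (f · x) (f' a x) a) {a : H} (ha : a ∈ U) :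
    HasFDerivAt (fun b ↦ ∫ x in K, f b x ∂μ) (∫ x in K, f' a x ∂μ) a := by
  obtain ⟨C, hC⟩ := exists_eventually_norm_le_of_isCompact hK hf' ha
  rw [hU.nhdsWithin_eq ha] at hC
  have hUa := hU.mem_nhds ha
  refine hasFDerivAt_integral_of_dominated_of_fderiv_le (bound := fun _ ↦ C) (inter_mem hC hUa)
    ?_ ((hf a ha).integrableOn_compact hK) ?_ ?_ (integrableOn_const hK.measure_ne_top) ?_
  · filter_upwards [hUa] with b hb
    exact (hf b hb).aestronglyMeasurable_of_isCompact hK hK.measurableSet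
  · exact (hf'.uncurry_left a ha).aestronglyMeasurable_of_isCompact hK hK.measurableSet
  · filter_upwards [ae_restrict_mem hK.measurableSet] with x hx b hb using hb.1 x hx
  · filter_upwards [ae_restrict_mem hK.measurableSet] with x hx b hb using hderiv b hb.2 x hx

theorem contDiffOn_one_setIntegral_of_isCompact (hK : IsCompact K) (hU : IsOpen U) {f : H → X → F}
    {f' : H → X → H →L[ℝ] F} (hf : ∀ a ∈ U, ContinuousOn (f a) K)
    (hf' : ContinuousOn f'.uncurry (U ×ˢ K))
    (hderiv : ∀ a ∈ U, ∀ x ∈ K, HasFDerivAt (f · x) (f' a x) a) :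
    ContDiffOn ℝ 1 (fun a ↦ ∫ x in K, f a x ∂μ) U := by
  have hint := fun a ↦ hasFDerivAt_setIntegral_of_isCompact (μ := μ) (a := a) hK hU hf hf' hderiv
  rw [← zero_add 1, contDiffOn_succ_iff_fderiv_of_isOpen hU, contDiffOn_zero]
  exact ⟨fun a ha ↦ (hint a ha).differentiableAt.differentiableWithinAt, by simp,
    (continuousOn_setIntegral_of_isCompact hK hf').congr fun a ha ↦ (hint a ha).fderiv⟩

end CompactParametricIntegral

section ProductSpaces

variable {E H F : Type*} [NormedAddCommGroup E] [NormedSpace ℝ E] [NormedAddCommGroup H]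
  [NormedSpace ℝ H] [NormedAddCommGroup F] [NormedSpace ℝ F] {U : Set H}

theorem contDiffOn_one_setIntegral_fst [MeasurableSpace E] [OpensMeasurableSpace E]
    {μ : Measure E} [IsFiniteMeasureOnCompacts μ] {V K : Set E} (hK : IsCompact K)
    (hV : IsOpen V) (hKV : K ⊆ V) (hU : IsOpen U) {f : E × H → F}
    (hf : ContDiffOn ℝ 1 f (V ×ˢ U)) :
    ContDiffOn ℝ 1 (fun a ↦ ∫ x in K, f (x, a) ∂μ) U := by
  have hVU := hV.prod hU
  refine contDiffOn_one_setIntegral_of_isCompact hK hU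
    (f' := fun a x ↦ (fderiv ℝ f (x, a)).comp (.inr ℝ E H)) ?_ ?_ ?_
  · exact fun a ha ↦ (hf.continuousOn.uncurry_right (f := fun x b ↦ f (x, b)) a ha).mono hKV
  · exact ((hf.continuousOn_fderiv_of_isOpen hVU le_rfl).comp continuous_swap.continuousOn
      fun _ hx ↦ ⟨hKV hx.2, hx.1⟩).clm_comp continuousOn_const
  · intro a ha x hx
    have hd : DifferentiableAt ℝ f (x, a) :=
      (hf.contDiffAt (hVU.mem_nhds ⟨hKV hx, ha⟩)).differentiableAt one_ne_zero
    exact hd.hasFDerivAt.comp a (hasFDerivAt_prodMk_right x a)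

theorem sub_eq_setIntegral_fderiv_segment [CompleteSpace F] {f : E → F} {f' : E → E →L[ℝ] F}
    (hf : ∀ x, HasFDerivAt f (f' x) x) (hf' : Continuous f') (x : E) :
    f x - f 0 = ∫ t in Icc (0 : ℝ) 1, f' (t • x) x := by
  have hline : ∀ t : ℝ, HasDerivAt (fun t : ℝ ↦ f (t • x)) (f' (t • x) x) t := fun t ↦ by
    simpa using! (hf (t • x)).comp_hasDerivAt t ((hasDerivAt_id t).smul_const x)
  have hcont : Continuous fun t : ℝ ↦ f' (t • x) x := by fun_prop
  rw [integral_Icc_eq_integral_Ioc, ← intervalIntegral.integral_of_le zero_le_one,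
    intervalIntegral.integral_eq_sub_of_hasDerivAt (fun t _ ↦ hline t)
      (hcont.intervalIntegrable 0 1), one_smul, zero_smul]

variable {S : E × H → F} {P : E × H → E →L[ℝ] F}

theorem contDiffOn_one_of_hasFDerivAt_fst [CompleteSpace F] (hU : IsOpen U)
    (hP : ContDiffOn ℝ 1 P (univ ×ˢ U))
    (hS : ∀ a ∈ U, ∀ q, HasFDerivAt (fun q' ↦ S (q', a)) (P (q, a)) q)
    (hS₀ : ContDiffOn ℝ 1 (fun a ↦ S (0, a)) U) :
    ContDiffOn ℝ 1 S (univ ×ˢ U) := by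
  have hintegrand : ContDiffOn ℝ 1 (fun x : ℝ × E × H ↦ P (x.1 • x.2.1, x.2.2) x.2.1)
      (univ ×ˢ univ ×ˢ U) :=
    (hP.comp (by fun_prop) fun _ hx ↦ ⟨mem_univ _, hx.2.2⟩).clm_apply (by fun_prop)
  have hintegral := contDiffOn_one_setIntegral_fst (μ := volume) (isCompact_Icc (a := (0 : ℝ))
    (b := 1)) isOpen_univ (subset_univ _) (isOpen_univ.prod hU) hintegrand
  refine ((hS₀.comp contDiffOn_snd fun _ hx ↦ hx.2).add hintegral).congr ?_
  rintro ⟨q, a⟩ ⟨-, ha⟩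
  have hPa : Continuous fun q' ↦ P (q', a) :=
    hP.continuousOn.comp_continuous (by fun_prop) fun _ ↦ ⟨mem_univ _, ha⟩
  exact eq_add_of_sub_eq' (sub_eq_setIntegral_fderiv_segment (hS a ha) hPa q)

end ProductSpaces

section MixedDerivative

variable {𝕜 E H F : Type*} [NontriviallyNormedField 𝕜] [NormedAddCommGroup E] [NormedSpace 𝕜 E]
  [NormedAddCommGroup H] [NormedSpace 𝕜 H] [NormedAddCommGroup F] [NormedSpace 𝕜 F]

theorem tendsto_add_smul_nhdsNE_prod_nhds (x v : E) :
    Tendsto (fun p : 𝕜 × E ↦ p.2 + p.1 • v) (𝓝[≠] 0 ×ˢ 𝓝 x) (𝓝 x) := by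
  have hcont : Continuous fun p : 𝕜 × E ↦ p.2 + p.1 • v := by fun_prop
  refine (hcont.tendsto' (0, x) x (by simp)).mono_left ?_
  rw [nhds_prod_eq]
  exact prod_mono_left _ nhdsWithin_le_nhds

theorem tendsto_slope_of_hasStrictFDerivAt {f : E → F} {f' : E →L[𝕜] F} {x : E}
    (hf : HasStrictFDerivAt f f' x) (v : E) :
    Tendsto (fun p : 𝕜 × E ↦ p.1⁻¹ • (f (p.2 + p.1 • v) - f p.2)) (𝓝[≠] 0 ×ˢ 𝓝 x)
      (𝓝 (f' v)) := by
  have hsmul : (fun p : 𝕜 × E ↦ p.2 + p.1 • v - p.2) =O[𝓝[≠] 0 ×ˢ 𝓝 x] Prod.fst :=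
    .of_bound ‖v‖ <| .of_forall fun p ↦ by simp [norm_smul, mul_comm]
  have hremainder : (fun p : 𝕜 × E ↦ f (p.2 + p.1 • v) - f p.2 - f' (p.2 + p.1 • v - p.2))
      =o[𝓝[≠] 0 ×ˢ 𝓝 x] Prod.fst :=
    (hf.isLittleO.comp_tendsto
      ((tendsto_add_smul_nhdsNE_prod_nhds x v).prodMk_nhds tendsto_snd)).trans_isBigO hsmul
  have hne : ∀ᶠ p : 𝕜 × E in 𝓝[≠] 0 ×ˢ 𝓝 x, p.1 ≠ 0 :=
    tendsto_fst.eventually self_mem_nhdsWithin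
  refine (zero_add (f' v) ▸ hremainder.tendsto_inv_smul_nhds_zero.add_const (f' v)).congr' ?_
  filter_upwards [hne] with p hp
  simp [smul_sub, inv_smul_smul₀ hp]

theorem hasFDerivAt_lineDeriv_of_hasStrictFDerivAt_partial [IsRCLikeNormedField 𝕜] {S : E × H → F}
    {P : E × H → E →L[𝕜] F} {P' : E × H →L[𝕜] E →L[𝕜] F} {D : E → F} {q : E} {a w : H}
    (hS : ∀ᶠ x in 𝓝 (q, a), HasFDerivAt (fun q' ↦ S (q', x.2)) (P x) x.1)
    (hP : HasStrictFDerivAt P P' (q, a))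
    (hD : ∀ᶠ q' in 𝓝 q, HasLineDerivAt 𝕜 S (D q') (q', a) (0, w)) :
    HasFDerivAt D (P' (0, w)) q := by
  have hbase : Tendsto (fun p : 𝕜 × E ↦ (p.2, a)) (𝓝[≠] 0 ×ˢ 𝓝 q) (𝓝 (q, a)) :=
    tendsto_snd.prodMk_nhds tendsto_const_nhds
  have hshift : Tendsto (fun p : 𝕜 × E ↦ (p.2, a + p.1 • w)) (𝓝[≠] 0 ×ˢ 𝓝 q) (𝓝 (q, a)) := by
    simpa [comp_def] using!
      (tendsto_add_smul_nhdsNE_prod_nhds (q, a) (0, w)).comp (tendsto_fst.prodMk hbase)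
  refine hasFDerivAt_of_tendstoUniformlyOnFilter (l := 𝓝[≠] (0 : 𝕜))
    (f := fun t q' ↦ t⁻¹ • (S (q', a + t • w) - S (q', a)))
    (f' := fun t q' ↦ t⁻¹ • (P (q', a + t • w) - P (q', a)))
    (g' := fun _ ↦ P' (0, w)) ?_ ?_ ?_
  · have hslope := (tendsto_slope_of_hasStrictFDerivAt hP (0, w)).comp (tendsto_fst.prodMk hbase)
    rw [tendstoUniformlyOnFilter_iff_tendsto]
    refine (tendsto_const_nhds.prodMk_nhds ?_).mono_right (nhds_le_uniformity _)
    simpa [comp_def] using! hslope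
  · filter_upwards [hbase.eventually hS, hshift.eventually hS] with p hp hp'
    exact (hp'.sub hp).const_smul _
  · filter_upwards [hD] with q' hq'
    simpa using hq'.tendsto_slope_zero

end MixedDerivative

section FiberwisePrimitive

variable {E H F : Type*} [NormedAddCommGroup E] [NormedSpace ℝ E] [NormedAddCommGroup H]
  [NormedSpace ℝ H] [NormedAddCommGroup F] [NormedSpace ℝ F] {U : Set H} {S : E × H → F}
  {P : E × H → E →L[ℝ] F}

theorem fderiv_apply_inl_of_hasFDerivAt_fst {q : E} {a : H} {L : E →L[ℝ] F}
    (hS : DifferentiableAt ℝ S (q, a)) (hL : HasFDerivAt (fun q' ↦ S (q', a)) L q) (v : E) :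
    fderiv ℝ S (q, a) (v, 0) = L v := by
  rw [← (hS.hasFDerivAt.comp q (hasFDerivAt_prodMk_left q a)).unique hL]
  rfl

theorem fderiv_apply_inr_apply {q : E} {a : H} (hP : DifferentiableAt ℝ P (q, a)) (w : H)
    (v : E) : fderiv ℝ P (q, a) (0, w) v = fderiv ℝ (fun a' ↦ P (q, a') v) a w := by
  have hcomp : HasFDerivAt (fun a' ↦ P (q, a')) ((fderiv ℝ P (q, a)).comp (.inr ℝ E H)) a :=
    hP.hasFDerivAt.comp a (hasFDerivAt_prodMk_right q a)
  rw [(hcomp.clm_apply (hasFDerivAt_const v a)).fderiv]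
  simp

theorem hasFDerivAt_fderiv_apply_inr (hU : IsOpen U) (hP : ContDiffOn ℝ 1 P (univ ×ˢ U))
    (hS : ∀ a ∈ U, ∀ q, HasFDerivAt (fun q' ↦ S (q', a)) (P (q, a)) q)
    (hSd : DifferentiableOn ℝ S (univ ×ˢ U)) {a : H} (ha : a ∈ U) (w : H) (q : E) :
    HasFDerivAt (fun q' ↦ fderiv ℝ S (q', a) (0, w)) (fderiv ℝ P (q, a) (0, w)) q := by
  have hnhds : ∀ q : E, univ ×ˢ U ∈ 𝓝 (q, a) := fun q ↦
    (isOpen_univ.prod hU).mem_nhds ⟨mem_univ q, ha⟩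
  refine hasFDerivAt_lineDeriv_of_hasStrictFDerivAt_partial (S := S) ?_
    ((hP.contDiffAt (hnhds q)).hasStrictFDerivAt one_ne_zero) (.of_forall fun q' ↦ ?_)
  · filter_upwards [hnhds q] with x hx using hS x.2 hx.2 x.1
  · exact (hSd.differentiableAt (hnhds q')).hasFDerivAt.hasLineDerivAt (0, w)

theorem fderiv_fderiv_apply_inr_apply (hU : IsOpen U) (hP : ContDiffOn ℝ 1 P (univ ×ˢ U))
    (hS : ∀ a ∈ U, ∀ q, HasFDerivAt (fun q' ↦ S (q', a)) (P (q, a)) q)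
    (hSd : DifferentiableOn ℝ S (univ ×ˢ U)) {a : H} (ha : a ∈ U) (w : H) (q v : E) :
    fderiv ℝ (fun q' ↦ fderiv ℝ S (q', a) (0, w)) q v = fderiv ℝ (fun a' ↦ P (q, a') v) a w := by
  have hPd : DifferentiableAt ℝ P (q, a) :=
    (hP.differentiableOn one_ne_zero).differentiableAt
      ((isOpen_univ.prod hU).mem_nhds ⟨mem_univ q, ha⟩)
  rw [(hasFDerivAt_fderiv_apply_inr hU hP hS hSd ha w q).fderiv, fderiv_apply_inr_apply hPd]

theorem continuousOn_fderiv_fderiv_apply_inr (hU : IsOpen U) (hP : ContDiffOn ℝ 1 P (univ ×ˢ U))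
    (hS : ∀ a ∈ U, ∀ q, HasFDerivAt (fun q' ↦ S (q', a)) (P (q, a)) q)
    (hSd : DifferentiableOn ℝ S (univ ×ˢ U)) (w : H) :
    ContinuousOn (fun x : E × H ↦ fderiv ℝ (fun q' ↦ fderiv ℝ S (q', x.2) (0, w)) x.1)
      (univ ×ˢ U) :=
  ((hP.continuousOn_fderiv_of_isOpen (isOpen_univ.prod hU) le_rfl).clm_apply
    continuousOn_const).congr fun x hx ↦
      (hasFDerivAt_fderiv_apply_inr hU hP hS hSd hx.2 w x.1).fderiv

theorem contDiff_one_fderiv_apply_inr (hU : IsOpen U) (hP : ContDiffOn ℝ 1 P (univ ×ˢ U))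
    (hS : ∀ a ∈ U, ∀ q, HasFDerivAt (fun q' ↦ S (q', a)) (P (q, a)) q)
    (hSd : DifferentiableOn ℝ S (univ ×ˢ U)) {a : H} (ha : a ∈ U) (w : H) :
    ContDiff ℝ 1 fun q ↦ fderiv ℝ S (q, a) (0, w) :=
  contDiff_one_iff_fderiv.2
    ⟨fun q ↦ (hasFDerivAt_fderiv_apply_inr hU hP hS hSd ha w q).differentiableAt,
      (continuousOn_fderiv_fderiv_apply_inr hU hP hS hSd w).comp_continuous
        (f := (·, a)) (by fun_prop) fun q ↦ ⟨mem_univ q, ha⟩⟩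

end FiberwisePrimitive

theorem hasFDerivAt_piRing_symm {𝕜 ι F : Type*} [NontriviallyNormedField 𝕜]
    [CompleteSpace 𝕜] [Fintype ι] [DecidableEq ι] [NormedAddCommGroup F] [NormedSpace 𝕜 F]
    {f : (ι → 𝕜) → F} {x : ι → 𝕜} (hf : DifferentiableAt 𝕜 f x) {g : ι → F}
    (hg : ∀ k, fderiv 𝕜 f x (Pi.single k 1) = g k) :
    HasFDerivAt f ((ContinuousLinearEquiv.piRing (𝕜 := 𝕜) (E := F) ι).symm g) x := by
  let e : ((ι → 𝕜) →L[𝕜] F) ≃L[𝕜] (ι → F) := ContinuousLinearEquiv.piRing ι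
  have hgrad : e.symm g = fderiv 𝕜 f x := e.symm_apply_eq.2 (funext fun k ↦ (hg k).symm)
  exact hgrad ▸ hf.hasFDerivAt

theorem generating_function_of_foliation_general
    {ι H : Type*} [Fintype ι] [DecidableEq ι] [NormedAddCommGroup H] [NormedSpace ℝ H]
    {U : Set H} (hU : IsOpen U) {η : (ι → ℝ) × H → ι → ℝ} (hη : ContDiffOn ℝ 1 η (univ ×ˢ U))
    {c : H → ι → ℝ} (hc : ContDiffOn ℝ 1 c U) {u : H → (ι → ℝ) → ℝ}
    (hu_diff : ∀ a ∈ U, Differentiable ℝ (u a))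
    (hu_grad : ∀ a ∈ U, ∀ q k, fderiv ℝ (u a) q (Pi.single k 1) = η (q, a) k - c a k)
    {S : (ι → ℝ) × H → ℝ} (hS : ∀ q a, S (q, a) = u a q - u a 0) :
    ContDiffOn ℝ 1 S (univ ×ˢ U) ∧
    (∀ q, ∀ a ∈ U, ∀ k, fderiv ℝ S (q, a) (Pi.single k 1, 0) = η (q, a) k - c a k) ∧
    ContDiffOn ℝ 1 (fun x k ↦ fderiv ℝ S x (Pi.single k 1, 0)) (univ ×ˢ U) ∧
    (∀ a ∈ U, ∀ w, Differentiable ℝ fun q ↦ fderiv ℝ S (q, a) (0, w)) ∧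
    (∀ a ∈ U, ∀ w q k, fderiv ℝ (fun q' ↦ fderiv ℝ S (q', a) (0, w)) q (Pi.single k 1)
      = fderiv ℝ (fun a' ↦ η (q, a') k) a w - fderiv ℝ c a w k) ∧
    (∀ w k, ContinuousOn (fun x : (ι → ℝ) × H ↦
      fderiv ℝ (fun q' ↦ fderiv ℝ S (q', x.2) (0, w)) x.1 (Pi.single k 1)) (univ ×ˢ U)) ∧
    (∀ a ∈ U, ∀ w, ContDiff ℝ 1 fun q ↦ fderiv ℝ S (q, a) (0, w)) := by
  have hnhds {q : ι → ℝ} {a} (ha : a ∈ U) : univ ×ˢ U ∈ 𝓝 (q, a) :=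
    (isOpen_univ.prod hU).mem_nhds ⟨mem_univ q, ha⟩
  have hg : ContDiffOn ℝ 1 (fun x ↦ η x - c x.2) (univ ×ˢ U) :=
    hη.sub (hc.comp contDiffOn_snd fun _ hx ↦ hx.2)
  let e : ((ι → ℝ) →L[ℝ] ℝ) ≃L[ℝ] (ι → ℝ) := ContinuousLinearEquiv.piRing ι
  let P (x : (ι → ℝ) × H) : (ι → ℝ) →L[ℝ] ℝ := e.symm (η x - c x.2)
  have hPk (x) (k) : P x (Pi.single k 1) = η x k - c x.2 k :=
    congrFun (e.apply_symm_apply _) k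
  have hP : ContDiffOn ℝ 1 P (univ ×ˢ U) := e.symm.contDiff.comp_contDiffOn hg
  have hSq : ∀ a ∈ U, ∀ q, HasFDerivAt (fun q' ↦ S (q', a)) (P (q, a)) q := by
    intro a ha q
    simpa only [hS] using!
      (hasFDerivAt_piRing_symm (hu_diff a ha q) (hu_grad a ha q)).sub_const (u a 0)
  have hS₁ : ContDiffOn ℝ 1 S (univ ×ˢ U) :=
    contDiffOn_one_of_hasFDerivAt_fst hU hP hSq (by simpa [hS] using! contDiffOn_const)
  have hSd := hS₁.differentiableOn one_ne_zero
  have hSk (q) (a) (ha : a ∈ U) (k) :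
      fderiv ℝ S (q, a) (Pi.single k 1, 0) = η (q, a) k - c a k := by
    rw [fderiv_apply_inl_of_hasFDerivAt_fst (hSd.differentiableAt (hnhds ha)) (hSq a ha q), hPk]
  refine ⟨hS₁, hSk, hg.congr fun x hx ↦ funext (hSk x.1 x.2 hx.2),
    fun a ha w ↦ (contDiff_one_fderiv_apply_inr hU hP hSq hSd ha w).differentiable one_ne_zero,
    fun a ha w q k ↦ ?_,
    fun w k ↦ (continuousOn_fderiv_fderiv_apply_inr hU hP hSq hSd w).clm_apply continuousOn_const,
    fun a ha ↦ contDiff_one_fderiv_apply_inr hU hP hSq hSd ha⟩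
  have hηd : DifferentiableAt ℝ (fun a' ↦ η (q, a')) a :=
    ((hη.differentiableOn one_ne_zero).differentiableAt (hnhds ha)).comp a (by fun_prop)
  have hcd := (hc.differentiableOn one_ne_zero).differentiableAt (hU.mem_nhds ha)
  simp only [fderiv_fderiv_apply_inr_apply hU hP hSq hSd ha, hPk, fderiv_apply hcd,
    fderiv_fun_sub (differentiableAt_pi.1 hηd k) (differentiableAt_pi.1 hcd k)]
  rfl

/-- **The generating function of a `C¹` Lagrangian foliation.**
Let `U ⊆ ℝⁿ` be open and `η(q,a)` a `C¹` map on `ℝⁿ × U`, `ℤⁿ`-periodic in `q`.  Set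
`c a = ∫_{[0,1]ⁿ} η (q,a) dq`, and assume that for each `a ∈ U` there is a differentiable
`ℤⁿ`-periodic `u_a` with `∇u_a = η(·,a) − c a`.  Define `S (q,a) = u_a q − u_a 0`.  Then:
(i) `S` is `C¹` on `ℝⁿ × U` with `∂S/∂q (q,a) = η (q,a) − c a`, so `∂S/∂q` is `C¹` in
`(q,a)`; and (ii) `∂S/∂a` is differentiable with respect to `q` with
`∂/∂q (∂S/∂a) (q,a) = ∂η/∂a (q,a) − Dc (a)`, which is continuous; in particular
`∂S/∂a` is `C¹` in the variable `q`. -/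
theorem generating_function_of_foliation
    (n : ℕ) (U : Set (Fin n → ℝ)) (hU : IsOpen U)
    (η : (Fin n → ℝ) × (Fin n → ℝ) → (Fin n → ℝ))
    (hηC1 : ContDiffOn ℝ 1 η (Set.univ ×ˢ U))
    (hηper : ∀ (q a : Fin n → ℝ) (m : Fin n → ℤ),
      η (q + (fun i => (m i : ℝ)), a) = η (q, a))
    (c : (Fin n → ℝ) → (Fin n → ℝ))
    (hc : ∀ a : Fin n → ℝ,
      c a = ∫ q in Set.univ.pi fun _ : Fin n => Set.Icc (0:ℝ) 1, η (q, a))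
    (u : (Fin n → ℝ) → (Fin n → ℝ) → ℝ)
    (hu_diff : ∀ a ∈ U, Differentiable ℝ (u a))
    (hu_per : ∀ a ∈ U, ∀ (q : Fin n → ℝ) (m : Fin n → ℤ),
      u a (q + fun i => (m i : ℝ)) = u a q)
    (hu_grad : ∀ a ∈ U, ∀ (q : Fin n → ℝ) (k : Fin n),
      fderiv ℝ (u a) q (Pi.single k 1) = η (q, a) k - c a k)
    (S : (Fin n → ℝ) × (Fin n → ℝ) → ℝ)
    (hS : ∀ q a : Fin n → ℝ, S (q, a) = u a q - u a 0) :
    -- (i) `S` is `C¹` on `ℝⁿ × U`, with `∂S/∂q = η − c`, which is `C¹` in `(q,a)`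
    (ContDiffOn ℝ 1 S (Set.univ ×ˢ U)) ∧
    (∀ q : Fin n → ℝ, ∀ a ∈ U, ∀ k : Fin n,
      fderiv ℝ S (q, a) ((Pi.single k 1 : Fin n → ℝ), (0 : Fin n → ℝ))
        = η (q, a) k - c a k) ∧
    (ContDiffOn ℝ 1
      (fun x : (Fin n → ℝ) × (Fin n → ℝ) =>
        fun k : Fin n => fderiv ℝ S x ((Pi.single k 1 : Fin n → ℝ), (0 : Fin n → ℝ)))
      (Set.univ ×ˢ U)) ∧
    -- (ii) `∂S/∂a` is differentiable in `q`, with `∂/∂q(∂S/∂a) = ∂η/∂a − Dc`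
    (∀ a ∈ U, ∀ j : Fin n,
      Differentiable ℝ
        (fun q : Fin n → ℝ =>
          fderiv ℝ S (q, a) ((0 : Fin n → ℝ), (Pi.single j 1 : Fin n → ℝ)))) ∧
    (∀ a ∈ U, ∀ (j : Fin n) (q : Fin n → ℝ) (k : Fin n),
      fderiv ℝ
          (fun q' : Fin n → ℝ =>
            fderiv ℝ S (q', a) ((0 : Fin n → ℝ), (Pi.single j 1 : Fin n → ℝ)))
          q (Pi.single k 1)
        = fderiv ℝ (fun a' : Fin n → ℝ => η (q, a') k) a (Pi.single j 1)
            - fderiv ℝ c a (Pi.single j 1) k) ∧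
    -- the mixed derivative is continuous on `ℝⁿ × U`
    (∀ j k : Fin n,
      ContinuousOn
        (fun x : (Fin n → ℝ) × (Fin n → ℝ) =>
          fderiv ℝ
            (fun q' : Fin n → ℝ =>
              fderiv ℝ S (q', x.2) ((0 : Fin n → ℝ), (Pi.single j 1 : Fin n → ℝ)))
            x.1 (Pi.single k 1))
        (Set.univ ×ˢ U)) ∧
    -- in particular `∂S/∂a` is `C¹` in the variable `q`
    (∀ a ∈ U, ∀ j : Fin n,
      ContDiff ℝ 1
        (fun q : Fin n → ℝ =>
          fderiv ℝ S (q, a) ((0 : Fin n → ℝ), (Pi.single j 1 : Fin n → ℝ)))) := by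
  have hc' : ContDiffOn ℝ 1 c U :=
    (contDiffOn_one_setIntegral_fst (isCompact_univ_pi fun _ ↦ isCompact_Icc) isOpen_univ
      (subset_univ _) hU hηC1).congr fun a _ ↦ hc a
  obtain ⟨h₁, h₂, h₃, h₄, h₅, h₆, h₇⟩ :=
    generating_function_of_foliation_general hU hηC1 hc' hu_diff hu_grad hS
  exact ⟨h₁, h₂, h₃, fun a ha j ↦ h₄ a ha _, fun a ha j ↦ h₅ a ha _, fun j ↦ h₆ _,
    fun a ha j ↦ h₇ a ha _⟩
end

section
/- Let U ⊆ ℝⁿ be open, c : U → ℝⁿ a C¹ map, and S : ℝⁿ × U → ℝ a C¹ function, ℤⁿ-periodic in the first variable q, such that ∂S/∂q is C¹ in (q,a) and ∂S/∂a is differentiable with respect to q with continuous mixed derivative ∂/∂q(∂S/∂a) = ∂/∂a(∂S/∂q). Define η(q,a) = c(a) + ∂S/∂q(q,a), and assume: (i) for all a ≠ a' in U and all q ∈ ℝⁿ, η(q,a) ≠ η(q,a') (the Lagrangian graphs are pairwise disjoint); and (ii) for every (q,a), the linear map Dc(a) + ∂²S/∂a∂q(q,a) : ℝⁿ → ℝⁿ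 (the derivative of a ↦ η(q,a)) is invertible. Then c is injective and Dc(a) is invertible for every a ∈ U; consequently c is a C¹ diffeomorphism from U onto its image. -/
/-!
Periodicity makes `S (·, a) - S (·, a')` attain a maximum at some `q`, and there
`∂S/∂q (q, a) = ∂S/∂q (q, a')`. So if `c a = c a'`, then `η (q, a) = η (q, a')`, whence `a = a'`.

The infinitesimal statement is the limit of this one. Coincidence points `qₜ` for the pairs
`(a, a + t v)` can be taken in a compact fundamental domain, and at any accumulation point `q` of
`qₜ` as `t → 0` strict differentiability of `∂S/∂q` gives `∂²S/∂a∂q (q, a) v = 0`. Hence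
`Dc (a) v = 0` forces `(Dc (a) + ∂²S/∂a∂q (q, a)) v = 0`, that is, `v = 0`. The inverse function
theorem then shows that the inverse of `c` is `C¹`.
-/

open Set Filter Topology Asymptotics Function

section FundamentalDomain

variable {ι : Type*}

theorem exists_add_intCast_mem_Icc (q : ι → ℝ) :
    ∃ m : ι → ℤ, q + (fun i ↦ (m i : ℝ)) ∈ Icc (0 : ι → ℝ) 1 := by
  have translate_eq_fract : q + (fun i ↦ ((-⌊q i⌋ : ℤ) : ℝ)) = fun i ↦ Int.fract (q i) := by
    funext i
    simp only [Pi.add_apply, Int.cast_neg, ← sub_eq_add_neg, Int.self_sub_floor]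
  refine ⟨fun i ↦ -⌊q i⌋, ?_⟩
  rw [translate_eq_fract]
  exact ⟨fun i ↦ Int.fract_nonneg (q i), fun i ↦ (Int.fract_lt_one (q i)).le⟩

theorem exists_mem_Icc_forall_mem_eq_of_periodic {α β : Type*} {f : (ι → ℝ) × α → β} {U : Set α}
    (hf : ∀ a ∈ U, ∀ q (m : ι → ℤ), f (q + (fun i ↦ (m i : ℝ)), a) = f (q, a)) (q : ι → ℝ) :
    ∃ k ∈ Icc (0 : ι → ℝ) 1, ∀ a ∈ U, f (k, a) = f (q, a) :=
  let ⟨m, hm⟩ := exists_add_intCast_mem_Icc q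
  ⟨_, hm, fun a ha ↦ hf a ha q m⟩

end FundamentalDomain

section CriticalPoint

variable {Q : Type*} [NormedAddCommGroup Q] [NormedSpace ℝ Q] {K : Set Q}

theorem exists_mem_fderiv_eq_zero {f : Q → ℝ} (hK : IsCompact K)
    (hf : Differentiable ℝ f) (hfK : ∀ q, ∃ k ∈ K, f k = f q) :
    ∃ q ∈ K, fderiv ℝ f q = 0 := by
  obtain ⟨k, hk, -⟩ := hfK 0
  obtain ⟨q, hq, hmax⟩ := hK.exists_isMaxOn ⟨k, hk⟩ hf.continuous.continuousOn
  refine ⟨q, hq, IsLocalMax.fderiv_eq_zero (Eventually.of_forall fun x ↦ ?_)⟩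
  obtain ⟨y, hy, hyx⟩ := hfK x
  exact hyx ▸ hmax hy

theorem exists_mem_hasFDerivAt_eq {f g : Q → ℝ} {f' g' : Q → StrongDual ℝ Q}
    (hK : IsCompact K) (hf : ∀ q, HasFDerivAt f (f' q) q) (hg : ∀ q, HasFDerivAt g (g' q) q)
    (hfgK : ∀ q, ∃ k ∈ K, f k = f q ∧ g k = g q) :
    ∃ q ∈ K, f' q = g' q := by
  have hsub (q : Q) : HasFDerivAt (f - g) (f' q - g' q) q := (hf q).sub (hg q)
  obtain ⟨q, hq, hcrit⟩ := exists_mem_fderiv_eq_zero (f := f - g) hK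
    (fun q ↦ (hsub q).differentiableAt) fun q ↦
      let ⟨k, hk, hfk, hgk⟩ := hfgK q
      ⟨k, hk, congrArg₂ (· - ·) hfk hgk⟩
  exact ⟨q, hq, sub_eq_zero.1 ((hsub q).fderiv ▸ hcrit)⟩

end CriticalPoint

section PartialDerivative

variable {𝕜 Q E F : Type*} [NontriviallyNormedField 𝕜]
  [NormedAddCommGroup Q] [NormedSpace 𝕜 Q] [NormedAddCommGroup E] [NormedSpace 𝕜 E]
  [NormedAddCommGroup F] [NormedSpace 𝕜 F]

theorem contDiffAt_of_contDiffOn_univ_prod {k : WithTop ℕ∞} {f : Q × E → F} {U : Set E}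
    (hU : IsOpen U) (hf : ContDiffOn 𝕜 k f (univ ×ˢ U)) (q : Q) {a : E} (ha : a ∈ U) :
    ContDiffAt 𝕜 k f (q, a) :=
  hf.contDiffAt ((isOpen_univ.prod hU).mem_nhds (mk_mem_prod (mem_univ q) ha))

theorem hasFDerivAt_prodMk_left_of_contDiffOn {f : Q × E → F} {U : Set E}
    (hU : IsOpen U) (hf : ContDiffOn 𝕜 1 f (univ ×ˢ U)) (q : Q) {a : E} (ha : a ∈ U) :
    HasFDerivAt (fun q' ↦ f (q', a)) ((fderiv 𝕜 f (q, a)).comp (.inl 𝕜 Q E)) q :=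
  ((contDiffAt_of_contDiffOn_univ_prod hU hf q ha).differentiableAt one_ne_zero).hasFDerivAt.comp q
    (hasFDerivAt_prodMk_left q a)

theorem eventually_add_smul_ne_of_hasStrictFDerivAt {f : E → F} {f' : E →L[𝕜] F} {x v : E}
    (hf : HasStrictFDerivAt f f' x) (hv : f' v ≠ 0) :
    ∀ᶠ z : 𝕜 × E in 𝓝 (0, x), z.1 ≠ 0 → f (z.2 + z.1 • v) ≠ f z.2 := by
  have htendsto : Tendsto (fun z : 𝕜 × E ↦ (z.2 + z.1 • v, z.2)) (𝓝 (0, x)) (𝓝 (x, x)) :=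
    Continuous.tendsto' (by fun_prop) _ _ (by simp)
  have hbigO : (fun z : 𝕜 × E ↦ z.1 • v) =O[𝓝 (0, x)] fun z ↦ z.1 • f' v :=
    (isBigO_refl _ _).smul (isBigO_const_const v hv _)
  have hequiv : (fun z : 𝕜 × E ↦ f (z.2 + z.1 • v) - f z.2) ~[𝓝 (0, x)] fun z ↦ z.1 • f' v := by
    have hlittleO := hf.isLittleO.comp_tendsto htendsto
    simp only [Function.comp_def, add_sub_cancel_left, map_smul] at hlittleO
    exact hlittleO.trans_isBigO hbigO
  filter_upwards [hequiv.isTheta.eq_zero_iff] with z hz ht heq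
  exact smul_ne_zero ht hv (hz.1 (sub_eq_zero.2 heq))

theorem exists_mem_hasStrictFDerivAt_apply_eq_zero_of_frequently {K : Set Q} {f : Q × E → F}
    {f' : Q → Q × E →L[𝕜] F} {a v : E}
    (hK : IsCompact K) (hf : ∀ q ∈ K, HasStrictFDerivAt f (f' q) (q, a))
    (hcoinc : ∃ᶠ t in 𝓝[≠] (0 : 𝕜), ∃ q ∈ K, f (q, a + t • v) = f (q, a)) :
    ∃ q ∈ K, f' q (0, v) = 0 := by
  by_contra! hne
  have hdistinct : ∀ᶠ t in 𝓝 (0 : 𝕜), ∀ q ∈ K, t ≠ 0 → f (q, a + t • v) ≠ f (q, a) := by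
    refine hK.eventually_forall_of_forall_eventually fun q hq ↦ ?_
    have hinclude : Tendsto (fun z : 𝕜 × Q ↦ (z.1, (z.2, a))) (𝓝 (0, q)) (𝓝 (0, (q, a))) :=
      Continuous.tendsto' (by fun_prop) _ _ rfl
    simpa using hinclude.eventually
      (eventually_add_smul_ne_of_hasStrictFDerivAt (hf q hq) (hne q hq))
  refine hcoinc (eventually_nhdsWithin_iff.2 (hdistinct.mono ?_))
  rintro t ht htne ⟨q, hq, heq⟩
  exact ht q hq htne heq

end PartialDerivative

section Inverse

theorem bijective_of_injective_of_bijective {k V W : Type*} [DivisionRing k]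
    [AddCommGroup V] [Module k V] [FiniteDimensional k V] [AddCommGroup W] [Module k W]
    {A B : V →ₗ[k] W} (hA : Injective A) (hB : Bijective B) : Bijective A := by
  let e := LinearEquiv.ofBijective B hB
  have : FiniteDimensional k W := Module.Finite.equiv e
  exact ⟨hA, (LinearMap.injective_iff_surjective_of_finrank_eq_finrank e.finrank_eq).1 hA⟩

theorem isInvertible_of_bijective {𝕜 E F : Type*} [NontriviallyNormedField 𝕜] [CompleteSpace 𝕜]
    [NormedAddCommGroup E] [NormedSpace 𝕜 E] [FiniteDimensional 𝕜 E]
    [NormedAddCommGroup F] [NormedSpace 𝕜 F] {A : E →L[𝕜] F} (hA : Bijective A) :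
    A.IsInvertible :=
  ⟨(LinearEquiv.ofBijective A.toLinearMap hA).toContinuousLinearEquiv, rfl⟩

theorem contDiffOn_invFunOn_image {𝕜 E F : Type*} [RCLike 𝕜]
    [NormedAddCommGroup E] [NormedSpace 𝕜 E] [CompleteSpace E]
    [NormedAddCommGroup F] [NormedSpace 𝕜 F]
    {k : WithTop ℕ∞} {c : E → F} {U : Set E} (hk : k ≠ 0) (hU : IsOpen U)
    (hc : ContDiffOn 𝕜 k c U) (hinj : InjOn c U)
    (hinv : ∀ a ∈ U, (fderiv 𝕜 c a).IsInvertible) :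
    ContDiffOn 𝕜 k (invFunOn c U) (c '' U) := by
  rintro _ ⟨a, ha, rfl⟩
  have hca : ContDiffAt 𝕜 k c a := hc.contDiffAt (hU.mem_nhds ha)
  obtain ⟨e, he⟩ := hinv a ha
  have hderiv : HasFDerivAt c (e : E →L[𝕜] F) a := he ▸ (hca.differentiableAt hk).hasFDerivAt
  have hleft : ∀ᶠ x in 𝓝 a, invFunOn c U (c x) = x :=
    mem_of_superset (hU.mem_nhds ha) fun _ hx ↦ hinj.leftInvOn_invFunOn hx
  exact ((hca.to_localInverse hderiv hk).congr_of_eventuallyEq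
    ((hca.hasStrictFDerivAt' hderiv hk).localInverse_unique hleft)).contDiffWithinAt

end Inverse

section GeneratingFunction

variable {Q E : Type*} [NormedAddCommGroup Q] [NormedSpace ℝ Q]
  {K : Set Q} {U : Set E} {S : Q × E → ℝ} {p : Q × E → StrongDual ℝ Q}

theorem exists_mem_momentum_eq (hK : IsCompact K)
    (hSK : ∀ q, ∃ k ∈ K, ∀ a ∈ U, S (k, a) = S (q, a))
    (hp : ∀ a ∈ U, ∀ q, HasFDerivAt (fun q' ↦ S (q', a)) (p (q, a)) q)
    {a a' : E} (ha : a ∈ U) (ha' : a' ∈ U) :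
    ∃ q ∈ K, p (q, a) = p (q, a') :=
  exists_mem_hasFDerivAt_eq hK (hp a ha) (hp a' ha') fun q ↦
    let ⟨k, hk, hS⟩ := hSK q
    ⟨k, hk, hS a ha, hS a' ha'⟩

variable {F : Type*} [NormedAddCommGroup E] [NormedSpace ℝ E]
  [NormedAddCommGroup F] [NormedSpace ℝ F] {c : E → F} {Φ : StrongDual ℝ Q →L[ℝ] F}

theorem exists_mem_fderiv_momentum_apply_eq_zero (hK : IsCompact K) (hU : IsOpen U)
    (hSK : ∀ q, ∃ k ∈ K, ∀ a ∈ U, S (k, a) = S (q, a))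
    (hp : ∀ a ∈ U, ∀ q, HasFDerivAt (fun q' ↦ S (q', a)) (p (q, a)) q)
    (hpC1 : ContDiffOn ℝ 1 (fun x ↦ Φ (p x)) (univ ×ˢ U)) {a : E} (ha : a ∈ U) (v : E) :
    ∃ q ∈ K, fderiv ℝ (fun a' ↦ Φ (p (q, a'))) a v = 0 := by
  have hstrict (q : Q) : HasStrictFDerivAt (fun x ↦ Φ (p x)) _ (q, a) :=
    (contDiffAt_of_contDiffOn_univ_prod hU hpC1 q ha).hasStrictFDerivAt one_ne_zero
  have hmem : ∀ᶠ t in 𝓝[≠] (0 : ℝ), a + t • v ∈ U :=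
    ((Continuous.tendsto' (by fun_prop) _ _ (by simp)).mono_left nhdsWithin_le_nhds).eventually
      (hU.mem_nhds ha)
  have hcoinc : ∀ᶠ t in 𝓝[≠] (0 : ℝ), ∃ q ∈ K, Φ (p (q, a + t • v)) = Φ (p (q, a)) :=
    hmem.mono fun t ht ↦
      let ⟨q, hq, hpq⟩ := exists_mem_momentum_eq hK hSK hp ht ha
      ⟨q, hq, congrArg Φ hpq⟩
  obtain ⟨q, hq, hzero⟩ := exists_mem_hasStrictFDerivAt_apply_eq_zero_of_frequently hK
    (fun q _ ↦ hstrict q) hcoinc.frequently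
  have hpartial := (hstrict q).hasFDerivAt.comp a (hasFDerivAt_prodMk_right q a)
  exact ⟨q, hq, (DFunLike.congr_fun hpartial.fderiv v).trans hzero⟩

/-- The compact set `K` plays the role of a fundamental domain for the symmetries of `S`, and `Φ`
expresses the covector `p = ∂S/∂q` in the space where `c` takes its values, e.g. in coordinates. -/
theorem cohomology_map_is_C1_diffeo_general [FiniteDimensional ℝ E]
    (hK : IsCompact K) (hU : IsOpen U) (hc : ContDiffOn ℝ 1 c U)
    (hSK : ∀ q, ∃ k ∈ K, ∀ a ∈ U, S (k, a) = S (q, a))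
    (hp : ∀ a ∈ U, ∀ q, HasFDerivAt (fun q' ↦ S (q', a)) (p (q, a)) q)
    (hpC1 : ContDiffOn ℝ 1 (fun x ↦ Φ (p x)) (univ ×ˢ U))
    (hdisj : ∀ a ∈ U, ∀ a' ∈ U, a ≠ a' → ∀ q, c a + Φ (p (q, a)) ≠ c a' + Φ (p (q, a')))
    (hinv : ∀ q, ∀ a ∈ U,
      Bijective fun v ↦ fderiv ℝ c a v + fderiv ℝ (fun a' ↦ Φ (p (q, a'))) a v) :
    InjOn c U ∧ (∀ a ∈ U, Bijective (fderiv ℝ c a)) ∧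
      ∃ g : F → E, ContDiffOn ℝ 1 g (c '' U) ∧ ∀ a ∈ U, g (c a) = a := by
  have hinj : InjOn c U := by
    intro a ha a' ha' hcc
    obtain ⟨q, -, hpq⟩ := exists_mem_momentum_eq hK hSK hp ha ha'
    by_contra hne
    exact hdisj a ha a' ha' hne q (by rw [hcc, hpq])
  have hbij (a : E) (ha : a ∈ U) : Bijective (fderiv ℝ c a) := by
    refine bijective_of_injective_of_bijective (A := (fderiv ℝ c a).toLinearMap)
      (B := (fderiv ℝ c a + fderiv ℝ (fun a' ↦ Φ (p (0, a'))) a).toLinearMap) ?_ (hinv 0 a ha)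
    refine (injective_iff_map_eq_zero (fderiv ℝ c a)).2 fun v hv ↦ ?_
    obtain ⟨q, -, hq⟩ := exists_mem_fderiv_momentum_apply_eq_zero hK hU hSK hp hpC1 ha v
    exact (hinv q a ha).injective (by simp only [hv, hq, map_zero, add_zero])
  have : CompleteSpace E := FiniteDimensional.complete ℝ E
  exact ⟨hinj, hbij, invFunOn c U,
    contDiffOn_invFunOn_image one_ne_zero hU hc hinj fun a ha ↦
      isInvertible_of_bijective (hbij a ha),
    fun a ha ↦ hinj.leftInvOn_invFunOn ha⟩

end GeneratingFunction

/-- The components of a covector on `ℝⁿ` in the basis dual to the standard one. -/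
noncomputable def covectorCoord (ι : Type*) [Fintype ι] [DecidableEq ι] :
    StrongDual ℝ (ι → ℝ) →L[ℝ] (ι → ℝ) :=
  ContinuousLinearMap.pi fun k ↦ ContinuousLinearMap.apply ℝ ℝ (Pi.single k 1)

/-- **`c` is a `C¹` diffeomorphism onto its image (Proposition on cohomology classes).**
Let `U ⊆ ℝⁿ` be open, `c : U → ℝⁿ` a `C¹` map, and `S (q,a)` a `C¹` function on
`ℝⁿ × U`, `ℤⁿ`-periodic in `q`, such that `∂S/∂q` is `C¹` in `(q,a)` and `∂S/∂a` is
differentiable in `q` with continuous mixed derivative `∂/∂q(∂S/∂a) = ∂/∂a(∂S/∂q)`.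
Set `η (q,a) = c a + ∂S/∂q (q,a)`, and assume (i) for `a ≠ a'` in `U` the graphs of
`η (·,a)` and `η (·,a')` are disjoint, and (ii) for every `(q,a)` the linear map
`Dc (a) + ∂²S/∂a∂q (q,a)` (the derivative of `a ↦ η (q,a)`) is invertible.  Then `c` is
injective on `U` with invertible derivative everywhere; consequently `c` is a `C¹`
diffeomorphism from `U` onto its image. -/
theorem cohomology_map_is_C1_diffeo
    (n : ℕ) (U : Set (Fin n → ℝ)) (hU : IsOpen U)
    (c : (Fin n → ℝ) → (Fin n → ℝ)) (hcC1 : ContDiffOn ℝ 1 c U)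
    (S : (Fin n → ℝ) × (Fin n → ℝ) → ℝ)
    (hSC1 : ContDiffOn ℝ 1 S (Set.univ ×ˢ U))
    (hSper : ∀ (q a : Fin n → ℝ) (m : Fin n → ℤ),
      S (q + (fun i => (m i : ℝ)), a) = S (q, a))
    (hSqC1 : ContDiffOn ℝ 1
      (fun x : (Fin n → ℝ) × (Fin n → ℝ) =>
        fun k : Fin n => fderiv ℝ S x ((Pi.single k 1 : Fin n → ℝ), (0 : Fin n → ℝ)))
      (Set.univ ×ˢ U))
    (hSadiff : ∀ a ∈ U, ∀ j : Fin n,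
      Differentiable ℝ
        (fun q : Fin n → ℝ =>
          fderiv ℝ S (q, a) ((0 : Fin n → ℝ), (Pi.single j 1 : Fin n → ℝ))))
    (hmix : ∀ a ∈ U, ∀ (q : Fin n → ℝ) (j k : Fin n),
      fderiv ℝ
          (fun q' : Fin n → ℝ =>
            fderiv ℝ S (q', a) ((0 : Fin n → ℝ), (Pi.single j 1 : Fin n → ℝ)))
          q (Pi.single k 1)
        = fderiv ℝ
            (fun a' : Fin n → ℝ =>
              fderiv ℝ S (q, a') ((Pi.single k 1 : Fin n → ℝ), (0 : Fin n → ℝ)))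
            a (Pi.single j 1))
    (hmixcont : ∀ j k : Fin n,
      ContinuousOn
        (fun x : (Fin n → ℝ) × (Fin n → ℝ) =>
          fderiv ℝ
            (fun q' : Fin n → ℝ =>
              fderiv ℝ S (q', x.2) ((0 : Fin n → ℝ), (Pi.single j 1 : Fin n → ℝ)))
            x.1 (Pi.single k 1))
        (Set.univ ×ˢ U))
    (η : (Fin n → ℝ) → (Fin n → ℝ) → (Fin n → ℝ))
    (hη : ∀ q a : Fin n → ℝ, η q a =
      c a + fun k : Fin n =>
        fderiv ℝ S (q, a) ((Pi.single k 1 : Fin n → ℝ), (0 : Fin n → ℝ)))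
    (hdisj : ∀ a ∈ U, ∀ a' ∈ U, a ≠ a' → ∀ q : Fin n → ℝ, η q a ≠ η q a')
    (hinv : ∀ q : Fin n → ℝ, ∀ a ∈ U,
      Function.Bijective (fun v : Fin n → ℝ =>
        fderiv ℝ c a v +
          fderiv ℝ
            (fun a' : Fin n → ℝ =>
              fun k : Fin n =>
                fderiv ℝ S (q, a') ((Pi.single k 1 : Fin n → ℝ), (0 : Fin n → ℝ)))
            a v)) :
    Set.InjOn c U ∧
    (∀ a ∈ U, Function.Bijective ⇑(fderiv ℝ c a)) ∧
    ∃ g : (Fin n → ℝ) → (Fin n → ℝ),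
      ContDiffOn ℝ 1 g (c '' U) ∧ ∀ a ∈ U, g (c a) = a := by
  simp only [hη] at hdisj
  exact cohomology_map_is_C1_diffeo_general (Φ := covectorCoord (Fin n))
    (p := fun x ↦ (fderiv ℝ S x).comp (.inl ℝ _ _)) isCompact_Icc hU hcC1
    (exists_mem_Icc_forall_mem_eq_of_periodic fun a _ q ↦ hSper q a)
    (fun _ ha q ↦ hasFDerivAt_prodMk_left_of_contDiffOn hU hSC1 q ha)
    hSqC1 hdisj hinv
end

section
/- Let f : ℝⁿ → ℝⁿ be a C¹ bijection whose inverse f⁻¹ is Lipschitz. Then Df(x) is invertible for every x ∈ ℝⁿ and f⁻¹ is C¹; that is, f is a C¹ diffeomorphism of ℝⁿ. -/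
/-!
A Lipschitz bound on `g = f⁻¹` at `f x` passes to the limit of the difference quotients of `f` and
gives `‖v‖ ≤ K ‖Df(x) v‖`, so `Df(x)` is injective with closed range. Its range is also dense:
given `w`, solve `f (x + d) = f x + c⁻¹ • w` exactly; as `c → ∞` the Lipschitz bound
makes `d = O(c⁻¹)`, so the linearisation error is `o(c⁻¹)` and `Df(x) (c • d) → w`. Density replaces
the dimension count by which injectivity gives surjectivity on `ℝⁿ`, so the argument works in any
Banach space. Once every `Df(x)` is invertible, the easy half of the inverse function theorem gives
the smoothness of `f⁻¹`.
-/

section InverseBound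

open Asymptotics Bornology Filter Function Topology
open scoped NNReal

variable {𝕜 E F : Type*} [NontriviallyNormedField 𝕜]
  [NormedAddCommGroup E] [NormedSpace 𝕜 E] [NormedAddCommGroup F] [NormedSpace 𝕜 F]
  {f : E → F} {f' : E →L[𝕜] F} {g : F → E} {x : E}

theorem tendsto_add_inv_smul_cobounded (x v : E) :
    Tendsto (fun c : 𝕜 ↦ x + c⁻¹ • v) (cobounded 𝕜) (𝓝 x) := by
  simpa using ((tendsto_inv₀_cobounded (α := 𝕜)).smul_const v).const_add x

theorem antilipschitzWith_of_hasFDerivAt_of_isBigOWith {K : ℝ≥0} (hf : HasFDerivAt f f' x)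
    (hK : IsBigOWith K (𝓝 x) (fun z ↦ z - x) fun z ↦ f z - f x) :
    AntilipschitzWith K f' := by
  refine f'.antilipschitz_of_bound fun v ↦ ?_
  have quotient_tendsto : Tendsto (fun c : 𝕜 ↦ c • (f (x + c⁻¹ • v) - f x)) (cobounded 𝕜)
      (𝓝 (f' v)) := hf.lim v tendsto_norm_cobounded_atTop
  refine ge_of_tendsto (quotient_tendsto.norm.const_mul (K : ℝ)) ?_
  filter_upwards [(tendsto_add_inv_smul_cobounded x v).eventually hK.bound,
    eventually_ne_cobounded (0 : 𝕜)] with c hc hc₀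
  calc ‖v‖ = ‖c‖ * ‖x + c⁻¹ • v - x‖ := by
        rw [add_sub_cancel_left, ← norm_smul, smul_inv_smul₀ hc₀]
    _ ≤ ‖c‖ * (K * ‖f (x + c⁻¹ • v) - f x‖) := by gcongr
    _ = K * ‖c • (f (x + c⁻¹ • v) - f x)‖ := by rw [norm_smul]; ring

theorem isLittleO_sub_sub_of_hasFDerivAt_of_isBigO (hf : HasFDerivAt f f' x)
    (hfg : ∀ᶠ y in 𝓝 (f x), f (g y) = y)
    (hg : (fun y ↦ g y - x) =O[𝓝 (f x)] fun y ↦ y - f x) :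
    (fun y ↦ y - f x - f' (g y - x)) =o[𝓝 (f x)] fun y ↦ y - f x := by
  have g_tendsto : Tendsto g (𝓝 (f x)) (𝓝 x) :=
    tendsto_sub_nhds_zero_iff.1 (hg.trans_tendsto (tendsto_sub_nhds_zero_iff.2 tendsto_id))
  refine ((hf.isLittleO.comp_tendsto g_tendsto).congr' ?_ .rfl).trans_isBigO hg
  filter_upwards [hfg] with y hy
  simp only [comp_apply, hy]

theorem denseRange_of_hasFDerivAt_of_isBigO (hf : HasFDerivAt f f' x)
    (hfg : ∀ᶠ y in 𝓝 (f x), f (g y) = y)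
    (hg : (fun y ↦ g y - x) =O[𝓝 (f x)] fun y ↦ y - f x) :
    DenseRange f' := by
  intro w
  let y : 𝕜 → F := fun c ↦ f x + c⁻¹ • w
  have error_isLittleO : (fun c ↦ y c - f x - f' (g (y c) - x)) =o[cobounded 𝕜]
      fun c ↦ y c - f x :=
    (isLittleO_sub_sub_of_hasFDerivAt_of_isBigO hf hfg hg).comp_tendsto
      (tendsto_add_inv_smul_cobounded (f x) w)
  have smul_displacement : (fun c : 𝕜 ↦ c • (y c - f x)) =ᶠ[cobounded 𝕜] fun _ ↦ w := by
    filter_upwards [eventually_ne_cobounded (0 : 𝕜)] with c hc₀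
    rw [add_sub_cancel_left, smul_inv_smul₀ hc₀]
  have scaled_error : (fun c : 𝕜 ↦ w - f' (c • (g (y c) - x))) =o[cobounded 𝕜] fun _ ↦ w := by
    refine ((isBigO_refl (fun c : 𝕜 ↦ c) _).smul_isLittleO error_isLittleO).congr' ?_
      smul_displacement
    filter_upwards [smul_displacement] with c hc
    rw [smul_sub, hc, map_smul]
  have scaled_error_tendsto :
      Tendsto (fun c : 𝕜 ↦ w - f' (c • (g (y c) - x))) (cobounded 𝕜) (𝓝 0) :=
    (isLittleO_one_iff ℝ).1 (scaled_error.trans_isBigO (isBigO_const_const w one_ne_zero _))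
  have image_tendsto : Tendsto (fun c : 𝕜 ↦ f' (c • (g (y c) - x))) (cobounded 𝕜) (𝓝 w) := by
    simpa using scaled_error_tendsto.const_sub w
  exact mem_closure_of_tendsto image_tendsto (.of_forall fun _ ↦ Set.mem_range_self _)

variable [CompleteSpace E]

theorem isInvertible_of_antilipschitzWith_of_denseRange {K : ℝ≥0} (hK : AntilipschitzWith K f')
    (hf' : DenseRange f') : f'.IsInvertible := by
  have range_closed : IsClosed (Set.range f') := hK.isClosed_range f'.uniformContinuous
  have surjective : Surjective f' :=
    Set.range_eq_univ.1 (range_closed.closure_eq ▸ hf'.closure_range)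
  have : CompleteSpace F :=
    ((hK.isUniformInducing f'.uniformContinuous).completeSpace_congr surjective).1 ‹_›
  exact ⟨.ofBijective f' (LinearMap.ker_eq_bot.2 hK.injective)
    (LinearMap.range_eq_top.2 surjective), ContinuousLinearEquiv.coe_ofBijective ..⟩

theorem isInvertible_of_hasFDerivAt_of_isBigO (hf : HasFDerivAt f f' x)
    (hgf : ∀ᶠ z in 𝓝 x, g (f z) = z) (hfg : ∀ᶠ y in 𝓝 (f x), f (g y) = y)
    (hg : (fun y ↦ g y - x) =O[𝓝 (f x)] fun y ↦ y - f x) :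
    f'.IsInvertible := by
  obtain ⟨K, hK₀, hK⟩ := hg.exists_nonneg
  lift K to ℝ≥0 using hK₀
  have sub_isBigOWith : IsBigOWith K (𝓝 x) (fun z ↦ z - x) fun z ↦ f z - f x := by
    refine (hK.comp_tendsto hf.continuousAt).congr' rfl ?_ .rfl
    filter_upwards [hgf] with z hz
    simp only [comp_apply, hz]
  exact isInvertible_of_antilipschitzWith_of_denseRange
    (antilipschitzWith_of_hasFDerivAt_of_isBigOWith hf sub_isBigOWith)
    (denseRange_of_hasFDerivAt_of_isBigO hf hfg hg)

theorem contDiff_symm_of_isInvertible_fderiv {n : WithTop ℕ∞} (hn : n ≠ 0) (f : E ≃ₜ F)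
    (hf : ContDiff 𝕜 n f) (hf' : ∀ x, (fderiv 𝕜 f x).IsInvertible) :
    ContDiff 𝕜 n f.symm := by
  choose fderivEquiv fderivEquiv_eq using hf'
  refine f.contDiff_symm (f₀' := fderivEquiv) (fun x ↦ ?_) hf
  rw [fderivEquiv_eq]
  exact (hf.differentiable hn x).hasFDerivAt

theorem c1_bijection_with_lipschitz_inverse_is_diffeo_general {n : WithTop ℕ∞} (hn : n ≠ 0)
    (f : E ≃ F) (hf : ContDiff 𝕜 n f) (hf_symm : LocallyLipschitz f.symm) :
    (∀ x, (fderiv 𝕜 f x).IsInvertible) ∧ ContDiff 𝕜 n f.symm := by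
  have fderiv_invertible (x : E) : (fderiv 𝕜 f x).IsInvertible := by
    refine isInvertible_of_hasFDerivAt_of_isBigO (g := f.symm) (hf.differentiable hn x).hasFDerivAt
      (.of_forall f.symm_apply_apply) (.of_forall f.apply_symm_apply) ?_
    obtain ⟨K, t, ht, hK⟩ := hf_symm (f x)
    refine .of_bound K ?_
    filter_upwards [ht] with y hy
    simpa only [f.symm_apply_apply] using hK.norm_sub_le hy (mem_of_mem_nhds ht)
  let fHomeo : E ≃ₜ F := ⟨f, hf.continuous, hf_symm.continuous⟩
  exact ⟨fderiv_invertible, contDiff_symm_of_isInvertible_fderiv hn fHomeo hf fderiv_invertible⟩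

end InverseBound

/-- **A `C¹` bijection with Lipschitz inverse is a `C¹` diffeomorphism.**
Let `f : ℝⁿ → ℝⁿ` be a `C¹` bijection whose inverse is Lipschitz.  Then `Df (x)` is
invertible for every `x`, and `f⁻¹` is `C¹`; that is, `f` is a `C¹` diffeomorphism. -/
theorem c1_bijection_with_lipschitz_inverse_is_diffeo
    (n : ℕ) (f : (Fin n → ℝ) ≃ (Fin n → ℝ))
    (hf : ContDiff ℝ 1 ⇑f)
    (K : NNReal) (hK : LipschitzWith K ⇑f.symm) :
    (∀ x : Fin n → ℝ, Function.Bijective ⇑(fderiv ℝ (⇑f) x)) ∧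
      ContDiff ℝ 1 ⇑f.symm :=
  (c1_bijection_with_lipschitz_inverse_is_diffeo_general one_ne_zero f hf
    hK.locallyLipschitz).imp_left fun fderiv_invertible x ↦ (fderiv_invertible x).bijective
end
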